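/- Let A₁, A₂, A₃, A₄, A₅ be pairwise distinct, pairwise noncrossing nonempty compact convex subsets of ℝ² in general position, with no two tangent and no line tangent to three of them. Then there exist five points x₁, …, x₅ ∈ ℝ², no three of which are collinear, such that for all indices i < j < k: if det(x_j − x_i, x_k − x_i) > 0 then the ordered triple (A_i, A_j, A_k) is counterclockwise oriented, and if det(x_j − x_i, x_k − x_i) < 0 then (A_i, A_j, A_k) is clockwise oriented. -/

import Mathlib

open Set

noncomputable section

/-- The Euclidean plane. -/
abbrev Plane : Type := EuclideanSpace ℝ (Fin 2)

/-- The 2×2 determinant of two plane vectors. -/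
def det2 (u v : Plane) : ℝ := u 0 * v 1 - u 1 * v 0

/-- A convex body in the plane: nonempty, compact and convex. -/
def ConvexBody2 (A : Set Plane) : Prop := A.Nonempty ∧ IsCompact A ∧ Convex ℝ A

/-- A family of sets is in convex position if removing any member changes the
convex hull of the union of the family. -/
def ConvexPos (F : Set (Set Plane)) : Prop :=
  ∀ A ∈ F, convexHull ℝ (⋃₀ F) ≠ convexHull ℝ (⋃₀ (F \ {A}))

/-- A family is in general position if every 3-element subfamily is in convex position. -/
def GenPos (F : Set (Set Plane)) : Prop :=
  ∀ G ⊆ F, G.ncard = 3 → ConvexPos G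

/-- Two sets are noncrossing if both set differences are connected. -/
def NoncrossingPair (A B : Set Plane) : Prop := IsConnected (A \ B) ∧ IsConnected (B \ A)

/-- Two convex bodies are tangent if they intersect but their interiors are disjoint. -/
def TangentBodies (A B : Set Plane) : Prop :=
  (A ∩ B).Nonempty ∧ interior A ∩ interior B = ∅

/-- The line `{x | f x = c}` (for `f ≠ 0`) is tangent to `A`:
it meets `A` and `A` lies in one of the two closed half-planes it bounds. -/
def TangentLineTo (f : Plane →ₗ[ℝ] ℝ) (c : ℝ) (A : Set Plane) : Prop :=
  (∃ x ∈ A, f x = c) ∧ ((∀ x ∈ A, f x ≤ c) ∨ (∀ x ∈ A, c ≤ f x))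

/-- No line is tangent to three distinct members of the family. -/
def NoTripleTangentLine (F : Set (Set Plane)) : Prop :=
  ∀ f : Plane →ₗ[ℝ] ℝ, f ≠ 0 → ∀ c : ℝ, ∀ A ∈ F, ∀ B ∈ F, ∀ C ∈ F,
    A ≠ B → B ≠ C → A ≠ C →
    ¬ (TangentLineTo f c A ∧ TangentLineTo f c B ∧ TangentLineTo f c C)

/-- The ordered triple `(A₁, A₂, A₃)` is counterclockwise oriented. -/
def CCWOriented (A₁ A₂ A₃ : Set Plane) : Prop :=
  ∃ a₁ ∈ A₁ ∩ frontier (convexHull ℝ (A₁ ∪ A₂ ∪ A₃)),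
  ∃ a₂ ∈ A₂ ∩ frontier (convexHull ℝ (A₁ ∪ A₂ ∪ A₃)),
  ∃ a₃ ∈ A₃ ∩ frontier (convexHull ℝ (A₁ ∪ A₂ ∪ A₃)),
    0 < det2 (a₂ - a₁) (a₃ - a₁)

/-- The ordered triple `(A₁, A₂, A₃)` is clockwise oriented. -/
def CWOriented (A₁ A₂ A₃ : Set Plane) : Prop :=
  ∃ a₁ ∈ A₁ ∩ frontier (convexHull ℝ (A₁ ∪ A₂ ∪ A₃)),
  ∃ a₂ ∈ A₂ ∩ frontier (convexHull ℝ (A₁ ∪ A₂ ∪ A₃)),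
  ∃ a₃ ∈ A₃ ∩ frontier (convexHull ℝ (A₁ ∪ A₂ ∪ A₃)),
    det2 (a₂ - a₁) (a₃ - a₁) < 0

/-- An affine line in the plane: an affine subspace with 1-dimensional direction. -/
def IsLine (L : AffineSubspace ℝ Plane) : Prop := Module.finrank ℝ L.direction = 1

/-- `L` is a transversal line of the family `F`. -/
def TransversalLine (L : AffineSubspace ℝ Plane) (F : Set (Set Plane)) : Prop :=
  IsLine L ∧ ∀ A ∈ F, ((L : Set Plane) ∩ A).Nonempty

/-!
Order the bodies by the values of their support functions in each direction `θ`. For two noncrossing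
bodies the sign of the difference of the support functions alternates at most once around the
circle, since four alternating directions would give a chord of one body that separates the
difference of the other. General position makes each body of a triple the highest of the three in
some direction. If the directions in which `A i`, `A j` and `A k` are highest occur in this cyclic
order, then their points of contact turn counterclockwise. A triple may be oriented in both ways,
but those oriented in only one way satisfy Knuth's axioms for CC systems, apart from totality. The
three order types of five points in general position leave no room for a counterexample: a finite
check shows that every such partial orientation of the triples of five labels extends to that of
suitably labeled points.
-/

section CyclicOrder

variable {X : Type*} [LinearOrder X] {w x y z : X}

/-- The strict cyclic order of a linear order closed up to a circle: going up from `x` one meets `y`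
before `z`. It is `sbtw` for `LinearOrder.toCircularOrder`, which is not an instance. -/
def CyclicLT (x y z : X) : Prop :=
  (x < y ∧ y < z) ∨ (y < z ∧ z < x) ∨ (z < x ∧ x < y)

theorem CyclicLT.rotate (h : CyclicLT x y z) : CyclicLT y z x := by
  grind [CyclicLT]

theorem cyclicLT_or_cyclicLT (hxy : x ≠ y) (hyz : y ≠ z) (hxz : x ≠ z) :
    CyclicLT x y z ∨ CyclicLT x z y := by
  grind [CyclicLT]

theorem cyclicLT_toDual :
    CyclicLT (OrderDual.toDual x) (OrderDual.toDual y) (OrderDual.toDual z) ↔ CyclicLT x z y := by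
  simp only [CyclicLT, OrderDual.toDual_lt_toDual]
  tauto

end CyclicOrder

section Tops

variable {ι X K : Type*} [LinearOrder K] {h : X → ι → K} {i j k : ι} {x : X}

/-- At the parameter `x`, member `i` is strictly higher than `j` and `k`. -/
def IsTopAmong (h : X → ι → K) (x : X) (i j k : ι) : Prop := h x j < h x i ∧ h x k < h x i

theorem IsTopAmong.symm (hi : IsTopAmong h x i j k) : IsTopAmong h x i k j := ⟨hi.2, hi.1⟩

variable [LinearOrder X]

/-- Each of `i, j, k` is somewhere the highest of the three, in this cyclic order of the
parameters. -/
def TopsInOrder (h : X → ι → K) (i j k : ι) : Prop :=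
  ∃ x y z, CyclicLT x y z ∧ IsTopAmong h x i j k ∧ IsTopAmong h y j k i ∧ IsTopAmong h z k i j

theorem TopsInOrder.rotate : TopsInOrder h i j k → TopsInOrder h j k i := by
  rintro ⟨x, y, z, hc, hi, hj, hk⟩
  exact ⟨y, z, x, hc.rotate, hj, hk, hi⟩

theorem topsInOrder_ofDual :
    TopsInOrder (fun x : Xᵒᵈ => h (OrderDual.ofDual x)) i j k ↔ TopsInOrder h i k j := by
  constructor
  · rintro ⟨x, y, z, hc, hi, hj, hk⟩
    exact ⟨_, _, _, cyclicLT_toDual.1 hc, hi.symm, hk.symm, hj.symm⟩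
  · rintro ⟨x, y, z, hc, hi, hj, hk⟩
    exact ⟨_, _, _, cyclicLT_toDual.2 hc, hi.symm, hk.symm, hj.symm⟩

/-- The tops of `i, j, k` determine the orientation of the triple: they occur in the cyclic order
`i, j, k` but not in the opposite one. -/
def Forces (h : X → ι → K) (i j k : ι) : Prop := TopsInOrder h i j k ∧ ¬ TopsInOrder h i k j

namespace Forces

theorem rotate (f : Forces h i j k) : Forces h j k i :=
  ⟨f.1.rotate, fun g => f.2 g.rotate⟩

theorem asymm (f : Forces h i j k) : ¬ Forces h i k j := fun g => f.2 g.1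

theorem pairwise_ne (f : Forces h i j k) : i ≠ j ∧ j ≠ k ∧ i ≠ k := by
  obtain ⟨⟨x, y, z, -, hi, hj, -⟩, -⟩ := f
  refine ⟨?_, ?_, ?_⟩ <;> rintro rfl
  exacts [hi.1.false, hj.1.false, hi.2.false]

theorem ofDual (f : Forces h i j k) : Forces (fun x : Xᵒᵈ => h (OrderDual.ofDual x)) i k j := by
  simpa only [Forces, topsInOrder_ofDual] using f

theorem of_ofDual (f : Forces (fun x : Xᵒᵈ => h (OrderDual.ofDual x)) i j k) : Forces h i k j := by
  simpa only [Forces, topsInOrder_ofDual] using f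

theorem cyclicLT (f : Forces h i j k) {x y z : X} (hi : IsTopAmong h x i j k)
    (hj : IsTopAmong h y j k i) (hk : IsTopAmong h z k i j) : CyclicLT x y z := by
  have hxy : x ≠ y := by rintro rfl; exact hi.1.asymm hj.2
  have hyz : y ≠ z := by rintro rfl; exact hj.1.asymm hk.2
  have hxz : x ≠ z := by rintro rfl; exact hi.2.asymm hk.1
  exact (cyclicLT_or_cyclicLT hxy hyz hxz).resolve_right fun hc =>
    f.2 ⟨x, z, y, hc, hi.symm, hk.symm, hj.symm⟩

end Forces

end Tops

/-- The orientation relation of a configuration in which only some triples are oriented: Knuth's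
axioms of CC systems (*Axioms and Hulls*) without totality. -/
structure PartialCCSystem {ι : Type*} (F : ι → ι → ι → Prop) : Prop where
  rotate {i j k : ι} : F i j k → F j k i
  asymm {i j k : ι} : F i j k → ¬ F i k j
  interior {a b c t : ι} : F t a b → F t b c → F t c a → F a b c
  trans {p q r s t : ι} : F t s p → F t s q → F t s r → F t p q → F t q r → F t p r
  dual_trans {p q r s t : ι} : F t p s → F t q s → F t r s → F t p q → F t q r → F t p r

/-- Height functions on a common linearly ordered set of parameters, pairwise distinct at every
parameter, such that no two of them overtake each other more than twice around the circle, and each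
is somewhere the highest of any three. -/
structure NoninterleavingHeights {ι X K : Type*} [LinearOrder X] [LinearOrder K]
    (h : X → ι → K) : Prop where
  injective (x : X) : Function.Injective (h x)
  noninterleaving {i j : ι} {w x y z : X} : w < x → x < y → y < z →
    h w j < h w i → h x i < h x j → h y j < h y i → h z i < h z j → False
  exists_isTopAmong {i j k : ι} : i ≠ j → j ≠ k → i ≠ k → ∃ x, IsTopAmong h x i j k

namespace NoninterleavingHeights

variable {ι X K : Type*} [LinearOrder X] [LinearOrder K] {h : X → ι → K}
  {a b c i j k p q r s t : ι}

theorem lt_of_not_lt (S : NoninterleavingHeights h) {x : X} (hij : i ≠ j)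
    (hx : ¬ h x i < h x j) : h x j < h x i :=
  (not_lt.1 hx).lt_of_ne ((S.injective x).ne hij.symm)

theorem ofDual (S : NoninterleavingHeights h) :
    NoninterleavingHeights fun x : Xᵒᵈ => h (OrderDual.ofDual x) where
  injective _ := S.injective _
  noninterleaving hwx hxy hyz hw hx hy hz := S.noninterleaving (OrderDual.ofDual_lt_ofDual.2 hyz)
    (OrderDual.ofDual_lt_ofDual.2 hxy) (OrderDual.ofDual_lt_ofDual.2 hwx) hz hy hx hw
  exists_isTopAmong := S.exists_isTopAmong

theorem topsInOrder_or_topsInOrder (S : NoninterleavingHeights h) (hij : i ≠ j) (hjk : j ≠ k)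
    (hik : i ≠ k) : TopsInOrder h i j k ∨ TopsInOrder h i k j := by
  obtain ⟨x, hi⟩ := S.exists_isTopAmong hij hjk hik
  obtain ⟨y, hj⟩ := S.exists_isTopAmong hjk hik.symm hij.symm
  obtain ⟨z, hk⟩ := S.exists_isTopAmong hik.symm hij hjk.symm
  by_contra! hn
  have hzy : CyclicLT x z y := by
    by_contra hc
    refine hn.1 ⟨x, y, z, (cyclicLT_or_cyclicLT ?_ ?_ ?_).resolve_right hc, hi, hj, hk⟩ <;>
      rintro rfl
    exacts [hi.1.asymm hj.2, hj.1.asymm hk.2, hi.2.asymm hk.1]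
  exact hn.2 ⟨x, z, y, hzy, hi.symm, hk.symm, hj.symm⟩

theorem forces_iff (S : NoninterleavingHeights h) (hij : i ≠ j) (hjk : j ≠ k) (hik : i ≠ k) :
    Forces h i j k ↔ ¬ TopsInOrder h i k j :=
  ⟨And.right, fun hn => ⟨(S.topsInOrder_or_topsInOrder hij hjk hik).resolve_right hn, hn⟩⟩

theorem not_alternating (S : NoninterleavingHeights h) {w x y z : X} (hwxy : CyclicLT w x y)
    (hyzw : CyclicLT y z w) (hw : h w j < h w i) (hx : h x i < h x j) (hy : h y j < h y i)
    (hz : h z i < h z j) : False := by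
  have h₁ : ¬ (w < x ∧ x < y ∧ y < z) := fun hlt =>
    S.noninterleaving hlt.1 hlt.2.1 hlt.2.2 hw hx hy hz
  have h₂ : ¬ (x < y ∧ y < z ∧ z < w) := fun hlt =>
    S.noninterleaving hlt.1 hlt.2.1 hlt.2.2 hx hy hz hw
  have h₃ : ¬ (y < z ∧ z < w ∧ w < x) := fun hlt =>
    S.noninterleaving hlt.1 hlt.2.1 hlt.2.2 hy hz hw hx
  have h₄ : ¬ (z < w ∧ w < x ∧ x < y) := fun hlt =>
    S.noninterleaving hlt.1 hlt.2.1 hlt.2.2 hz hw hx hy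
  grind [CyclicLT]

theorem exists_isTopAmong_of_fourth_above (S : NoninterleavingHeights h) (hab : Forces h t a b)
    (hbc : Forces h t b c) (hca : Forces h t c a) {τ : X} (ha : h τ a < h τ t)
    (hb : h τ b < h τ t) (hc : h τ c < h τ t) :
    ∃ x, h x t < h x a ∧ IsTopAmong h x a b c := by
  obtain ⟨hta, hne_ab, htb⟩ := hab.pairwise_ne
  obtain ⟨-, -, htc⟩ := hbc.pairwise_ne
  obtain ⟨-, hne_ca, -⟩ := hca.pairwise_ne
  obtain ⟨x, hxt, hxb⟩ := S.exists_isTopAmong hta.symm htb hne_ab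
  obtain ⟨y, hyt, hyc⟩ := S.exists_isTopAmong hta.symm htc hne_ca.symm
  by_contra! hn
  have hxc : h x a < h x c := S.lt_of_not_lt hne_ca fun hx => hn x hxt ⟨hxb, hx⟩
  have hyb : h y a < h y b := S.lt_of_not_lt hne_ab.symm fun hy => hn y hyt ⟨hy, hyc⟩
  have hτyx : CyclicLT τ y x := hbc.cyclicLT ⟨hb, hc⟩ ⟨hyc.trans hyb, hyt.trans hyb⟩
    ⟨hxt.trans hxc, hxb.trans hxc⟩
  have hτxy : CyclicLT τ x y := hca.cyclicLT ⟨hc, ha⟩ ⟨hxc, hxt.trans hxc⟩ ⟨hyt, hyc⟩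
  grind [CyclicLT]

theorem not_above_of_forces (S : NoninterleavingHeights h) (hab : Forces h t a b)
    (hbc : Forces h t b c) (hca : Forces h t c a) {τ : X} (ha : h τ a < h τ t)
    (hb : h τ b < h τ t) : ¬ h τ c < h τ t := fun hc => by
  obtain ⟨x, hxt, hxa⟩ := S.exists_isTopAmong_of_fourth_above hab hbc hca ha hb hc
  obtain ⟨y, hyt, hyb⟩ := S.exists_isTopAmong_of_fourth_above hbc hca hab hb hc ha
  obtain ⟨z, hzt, hzc⟩ := S.exists_isTopAmong_of_fourth_above hca hab hbc hc ha hb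
  have hxy : CyclicLT τ x y := hab.cyclicLT ⟨ha, hb⟩ ⟨hxa.1, hxt⟩ ⟨hyt, hyb.2⟩
  have hyz : CyclicLT τ y z := hbc.cyclicLT ⟨hb, hc⟩ ⟨hyb.1, hyt⟩ ⟨hzt, hzc.2⟩
  have hzx : CyclicLT τ z x := hca.cyclicLT ⟨hc, ha⟩ ⟨hzc.1, hzt⟩ ⟨hxt, hxa.2⟩
  grind [CyclicLT]

theorem not_cyclicLT_of_below_tops (S : NoninterleavingHeights h) (hab : Forces h t a b)
    (hbc : Forces h t b c) (hca : Forces h t c a) {x y z : X} (hx : IsTopAmong h x a b c)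
    (hy : IsTopAmong h y b c a) (hz : IsTopAmong h z c a b) (hxt : h x t < h x a)
    (hyt : h y t < h y b) (hzt : h z t < h z c) : ¬ CyclicLT x z y := fun hxzy => by
  obtain ⟨hta, hne_ab, htb⟩ := hab.pairwise_ne
  obtain ⟨-, hne_bc, htc⟩ := hbc.pairwise_ne
  obtain ⟨-, hne_ca, -⟩ := hca.pairwise_ne
  have after_ab {τ : X} (ha : h τ a < h τ t) (hb : h τ b < h τ t) : CyclicLT τ x y :=
    hab.cyclicLT ⟨ha, hb⟩ ⟨hx.1, hxt⟩ ⟨hyt, hy.2⟩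
  have after_bc {τ : X} (hb : h τ b < h τ t) (hc : h τ c < h τ t) : CyclicLT τ y z :=
    hbc.cyclicLT ⟨hb, hc⟩ ⟨hy.1, hyt⟩ ⟨hzt, hz.2⟩
  have after_ca {τ : X} (hc : h τ c < h τ t) (ha : h τ a < h τ t) : CyclicLT τ z x :=
    hca.cyclicLT ⟨hc, ha⟩ ⟨hz.1, hzt⟩ ⟨hxt, hx.2⟩
  obtain ⟨τ₁, ha₁, hb₁⟩ := S.exists_isTopAmong hta hne_ab htb
  obtain ⟨τ₂, hb₂, hc₂⟩ := S.exists_isTopAmong htb hne_bc htc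
  obtain ⟨τ₃, hc₃, ha₃⟩ := S.exists_isTopAmong htc hne_ca hta
  have : CyclicLT τ₁ x y := after_ab ha₁ hb₁
  have : CyclicLT τ₂ y z := after_bc hb₂ hc₂
  have : CyclicLT τ₃ z x := after_ca hc₃ ha₃
  have ha₂ : h τ₂ t < h τ₂ a := S.lt_of_not_lt hta.symm fun ha => by
    grind [CyclicLT, after_ab ha hb₂]
  have hb₃ : h τ₃ t < h τ₃ b := S.lt_of_not_lt htb.symm fun hb => by
    grind [CyclicLT, after_ab ha₃ hb]
  have order₁ : CyclicLT x τ₃ τ₂ := by grind [CyclicLT]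
  have order₂ : CyclicLT τ₂ y x := by grind [CyclicLT]
  exact S.not_alternating order₁ order₂ hx.1 (ha₃.trans hb₃) (hb₂.trans ha₂) hy.2

theorem forces_interior (S : NoninterleavingHeights h) (hab : Forces h t a b)
    (hbc : Forces h t b c) (hca : Forces h t c a) : Forces h a b c := by
  obtain ⟨hta, hne_ab, htb⟩ := hab.pairwise_ne
  obtain ⟨-, hne_bc, htc⟩ := hbc.pairwise_ne
  obtain ⟨-, hne_ca, -⟩ := hca.pairwise_ne
  refine (S.forces_iff hne_ab hne_bc hne_ca.symm).2 ?_
  rintro ⟨x, z, y, hxzy, hx, hz, hy⟩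
  refine S.not_cyclicLT_of_below_tops hab hbc hca hx.symm hy.symm hz.symm ?_ ?_ ?_ hxzy <;>
    refine S.lt_of_not_lt ?_ fun hlt => ?_
  exacts [hta.symm, S.not_above_of_forces hab hbc hca hlt (hx.2.trans hlt) (hx.1.trans hlt),
    htb.symm, S.not_above_of_forces hab hbc hca (hy.1.trans hlt) hlt (hy.2.trans hlt),
    htc.symm, S.not_above_of_forces hab hbc hca (hz.2.trans hlt) (hz.1.trans hlt) hlt]

theorem not_separated (S : NoninterleavingHeights h) (hab : Forces h t a b) {x y u v : X}
    (hx : IsTopAmong h x t a b) (hy : IsTopAmong h y t a b) (hu : h u t < h u a)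
    (hv : h v t < h v b) (hxuy : CyclicLT x u y) : ¬ CyclicLT y v x := fun hyvx => by
  obtain ⟨hta, -, htb⟩ := hab.pairwise_ne
  have hub : h u b < h u t := S.lt_of_not_lt htb fun hut =>
    S.not_alternating hxuy hyvx hx.2 hut hy.2 hv
  have hva : h v a < h v t := S.lt_of_not_lt hta fun hvt =>
    S.not_alternating hxuy hyvx hx.1 hu hy.1 hvt
  have : CyclicLT x u v := hab.cyclicLT hx ⟨hub.trans hu, hu⟩ ⟨hv, hva.trans hv⟩
  have : CyclicLT y u v := hab.cyclicLT hy ⟨hub.trans hu, hu⟩ ⟨hv, hva.trans hv⟩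
  grind [CyclicLT]

theorem isTopAmong_of_cyclicLT (S : NoninterleavingHeights h) (hab : Forces h t a b) {x y z : X}
    (hx : IsTopAmong h x t a b) (hy : h y a < h y t) (hz : h z t < h z a)
    (hxyz : CyclicLT x y z) : IsTopAmong h y t a b := by
  obtain ⟨hta, hne_ab, htb⟩ := hab.pairwise_ne
  refine ⟨hy, S.lt_of_not_lt htb fun hyb => ?_⟩
  obtain ⟨w, hwt, hwb⟩ := S.exists_isTopAmong hta.symm htb hne_ab
  have hxwy : CyclicLT x w y := hab.cyclicLT hx ⟨hwb, hwt⟩ ⟨hyb, hy.trans hyb⟩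
  exact S.not_alternating hxwy (by grind [CyclicLT]) hx.1 hwt hy hz

theorem not_cyclicLT_of_middle_above (S : NoninterleavingHeights h) (hpq : Forces h t p q)
    (hqr : Forces h t q r) {m x y : X} (hp : h m p < h m t) (hq : h m q < h m t)
    (hr : h m r < h m t) (hx : IsTopAmong h x r t p) (hy : IsTopAmong h y p t r)
    (hxq : h x r < h x q) : ¬ CyclicLT m x y := fun hmxy => by
  obtain ⟨htp, hne_pq, htq⟩ := hpq.pairwise_ne
  obtain ⟨-, hne_qr, htr⟩ := hqr.pairwise_ne
  have hne_pr : p ≠ r := by rintro rfl; exact hx.2.false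
  obtain ⟨u, hut, huq⟩ := S.exists_isTopAmong htp.symm htq hne_pq
  obtain ⟨v, hvt, hvq⟩ := S.exists_isTopAmong htr.symm htq hne_qr.symm
  have after_pq {u w : X} (hu : IsTopAmong h u p q t) (hw : IsTopAmong h w q t p) :
      CyclicLT m u w := hpq.cyclicLT ⟨hp, hq⟩ hu hw
  have after_qr {w v : X} (hw : IsTopAmong h w q r t) (hv : IsTopAmong h v r t q) :
      CyclicLT m w v := hqr.cyclicLT ⟨hq, hr⟩ hw hv
  have hx' : IsTopAmong h x q t p := ⟨hx.1.trans hxq, hx.2.trans hxq⟩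
  have hmux : CyclicLT m u x := after_pq ⟨huq, hut⟩ hx'
  have hyq : h y p < h y q := S.lt_of_not_lt hne_pq.symm fun hlt => by
    grind [CyclicLT, after_pq ⟨hlt, hy.1⟩ hx']
  have hy' : IsTopAmong h y q r t := ⟨hy.2.trans hyq, hy.1.trans hyq⟩
  have hmyv : CyclicLT m y v := after_qr hy' ⟨hvt, hvq⟩
  have hur : h u r < h u p := S.lt_of_not_lt hne_pr fun hlt => by
    grind [CyclicLT, after_qr hy' ⟨hut.trans hlt, huq.trans hlt⟩]
  have hvp : h v p < h v r := S.lt_of_not_lt hne_pr.symm fun hlt => by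
    grind [CyclicLT, after_pq ⟨hvq.trans hlt, hvt.trans hlt⟩ hx']
  exact S.not_alternating (w := u) (x := x) (y := y) (z := v) (by grind [CyclicLT])
    (by grind [CyclicLT]) hur hx.2 hy.2 hvp

theorem not_cyclicLT_of_middle_below (S : NoninterleavingHeights h) (hpq : Forces h t p q)
    (hqr : Forces h t q r) {m x y : X} (hp : h m p < h m t) (hq : h m q < h m t)
    (hr : h m r < h m t) (hx : IsTopAmong h x r t p) (hy : IsTopAmong h y p t r)
    (hxq : h x q < h x r) : ¬ CyclicLT m x y := fun hmxy => by
  obtain ⟨htp, hne_pq, htq⟩ := hpq.pairwise_ne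
  obtain ⟨-, hne_qr, htr⟩ := hqr.pairwise_ne
  obtain ⟨u, hut, hur⟩ := S.exists_isTopAmong htq.symm htr hne_qr
  obtain ⟨v, hvt, hvp⟩ := S.exists_isTopAmong htq.symm htp hne_pq.symm
  have after_pq {u w : X} (hu : IsTopAmong h u p q t) (hw : IsTopAmong h w q t p) :
      CyclicLT m u w := hpq.cyclicLT ⟨hp, hq⟩ hu hw
  have after_qr {w v : X} (hw : IsTopAmong h w q r t) (hv : IsTopAmong h v r t q) :
      CyclicLT m w v := hqr.cyclicLT ⟨hq, hr⟩ hw hv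
  have hmux : CyclicLT m u x := after_qr ⟨hur, hut⟩ ⟨hx.1, hxq⟩
  have hyq : h y q < h y p := S.lt_of_not_lt hne_pq fun hlt => by
    grind [CyclicLT, after_qr ⟨hy.2.trans hlt, hy.1.trans hlt⟩ ⟨hx.1, hxq⟩]
  have hmyv : CyclicLT m y v := after_pq ⟨hyq, hy.1⟩ ⟨hvt, hvp⟩
  have huq : h u q < h u p := S.lt_of_not_lt hne_pq fun hlt => by
    grind [CyclicLT, after_pq ⟨hyq, hy.1⟩ ⟨hut, hlt⟩]
  have hvq : h v q < h v r := S.lt_of_not_lt hne_qr.symm fun hlt => by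
    grind [CyclicLT, after_qr ⟨hlt, hvt⟩ ⟨hx.1, hxq⟩]
  exact S.not_alternating (w := u) (x := x) (y := y) (z := v) (by grind [CyclicLT])
    (by grind [CyclicLT]) (hur.trans huq) hx.2 hy.2 (hvp.trans hvq)

theorem not_separated_of_common_below (S : NoninterleavingHeights h) (hsp : Forces h t s p)
    (hsr : Forces h t s r) {m x y z : X} (hs : h m s < h m t) (hp : h m p < h m t)
    (hr : h m r < h m t) (hx : IsTopAmong h x t p r) (hy : h y t < h y p) (hz : h z t < h z r)
    (hmyx : CyclicLT m y x) : ¬ CyclicLT x z m := fun hxzm => by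
  obtain ⟨hts, hne_sp, htp⟩ := hsp.pairwise_ne
  by_cases hxs : h x s < h x t
  · obtain ⟨u, hut, -⟩ := S.exists_isTopAmong hts.symm htp hne_sp
    have hmu : m ≠ u := by rintro rfl; exact hs.asymm hut
    have hux : u ≠ x := by rintro rfl; exact hxs.asymm hut
    rcases cyclicLT_or_cyclicLT hmu hux (by grind [CyclicLT]) with hmux | hmxu
    · exact S.not_separated hsr ⟨hs, hr⟩ ⟨hxs, hx.2⟩ hut hz hmux hxzm
    · exact S.not_separated hsp ⟨hxs, hx.1⟩ ⟨hs, hp⟩ hut hy (by grind [CyclicLT]) hmyx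
  · have hxs : h x t < h x s := S.lt_of_not_lt hts.symm hxs
    obtain ⟨u, hut, hus⟩ := S.exists_isTopAmong htp.symm hts hne_sp.symm
    have hmxu : CyclicLT m x u := hsp.cyclicLT ⟨hs, hp⟩ ⟨hx.1.trans hxs, hxs⟩ ⟨hut, hus⟩
    exact S.not_alternating hmyx (by grind [CyclicLT]) hp hy hx.1 hut

theorem not_topsInOrder_of_above (S : NoninterleavingHeights h) (hsp : Forces h t s p)
    (hsr : Forces h t s r) (hpq : Forces h t p q) (hqr : Forces h t q r) {m : X}
    (hs : h m s < h m t) (hp : h m p < h m t) (hq : h m q < h m t) (hr : h m r < h m t) :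
    ¬ TopsInOrder h t r p := by
  rintro ⟨x, z, y, hxzy, hx, hz, hy⟩
  have hmz : m ≠ z := by rintro rfl; exact hr.asymm hz.2
  have hmy : m ≠ y := by rintro rfl; exact hp.asymm hy.1
  have hzy : z ≠ y := by rintro rfl; exact hz.1.asymm hy.2
  rcases cyclicLT_or_cyclicLT hmz hzy hmy with hmzy | hmyz
  · obtain ⟨-, hne_qr, -⟩ := hqr.pairwise_ne
    by_cases hzq : h z q < h z r
    · exact S.not_cyclicLT_of_middle_below hpq hqr hp hq hr hz.symm hy hzq hmzy
    · exact S.not_cyclicLT_of_middle_above hpq hqr hp hq hr hz.symm hy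
        (S.lt_of_not_lt hne_qr hzq) hmzy
  · exact S.not_separated_of_common_below hsp hsr hs hp hr hx.symm hy.1 hz.2
      (by grind [CyclicLT]) (by grind [CyclicLT])

theorem forces_trans (S : NoninterleavingHeights h) (hsp : Forces h t s p) (hsq : Forces h t s q)
    (hsr : Forces h t s r) (hpq : Forces h t p q) (hqr : Forces h t q r) : Forces h t p r := by
  obtain ⟨hts, hne_sp, htp⟩ := hsp.pairwise_ne
  obtain ⟨-, hne_sq, htq⟩ := hsq.pairwise_ne
  obtain ⟨-, hne_sr, htr⟩ := hsr.pairwise_ne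
  have hne_pr : p ≠ r := by rintro rfl; exact hpq.asymm hqr
  refine (S.forces_iff htp hne_pr htr).2 ?_
  obtain ⟨z, hz, -⟩ := S.exists_isTopAmong hts.symm htp hne_sp
  obtain ⟨a, ha⟩ := S.exists_isTopAmong hts hne_sp htp
  obtain ⟨b, hb⟩ := S.exists_isTopAmong hts hne_sq htq
  obtain ⟨c, hc⟩ := S.exists_isTopAmong hts hne_sr htr
  have haz : a ≠ z := by rintro rfl; exact ha.1.asymm hz
  have hbz : b ≠ z := by rintro rfl; exact hb.1.asymm hz
  have hcz : c ≠ z := by rintro rfl; exact hc.1.asymm hz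
  have above {n : ι} (hsn : Forces h t s n) {x m : X} (hx : IsTopAmong h x t s n)
      (hm : h m s < h m t) (hxm : x = m ∨ CyclicLT x m z) : h m n < h m t := by
    rcases hxm with rfl | hxmz
    exacts [hx.2, (S.isTopAmong_of_cyclicLT hsn hx hm hz hxmz).2]
  -- The last of `a, b, c` before `z` is a parameter at which `t` is above all the others.
  obtain ⟨m, hm, ham, hbm, hcm⟩ : ∃ m, h m s < h m t ∧ (a = m ∨ CyclicLT a m z) ∧
      (b = m ∨ CyclicLT b m z) ∧ (c = m ∨ CyclicLT c m z) := by
    have last : ((b = a ∨ CyclicLT b a z) ∧ (c = a ∨ CyclicLT c a z)) ∨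
        ((a = b ∨ CyclicLT a b z) ∧ (c = b ∨ CyclicLT c b z)) ∨
        ((a = c ∨ CyclicLT a c z) ∧ (b = c ∨ CyclicLT b c z)) := by
      grind [CyclicLT]
    rcases last with hlast | hlast | hlast
    exacts [⟨a, ha.1, .inl rfl, hlast⟩, ⟨b, hb.1, hlast.1, .inl rfl, hlast.2⟩,
      ⟨c, hc.1, hlast.1, hlast.2, .inl rfl⟩]
  exact S.not_topsInOrder_of_above hsp hsr hpq hqr hm (above hsp ha hm ham) (above hsq hb hm hbm)
    (above hsr hc hm hcm)

theorem forces_dual_trans (S : NoninterleavingHeights h) (hps : Forces h t p s)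
    (hqs : Forces h t q s) (hrs : Forces h t r s) (hpq : Forces h t p q) (hqr : Forces h t q r) :
    Forces h t p r :=
  (S.ofDual.forces_trans hrs.ofDual hqs.ofDual hps.ofDual hqr.ofDual hpq.ofDual).of_ofDual

theorem partialCCSystem (S : NoninterleavingHeights h) : PartialCCSystem (Forces h) where
  rotate := Forces.rotate
  asymm := Forces.asymm
  interior := S.forces_interior
  trans := S.forces_trans
  dual_trans := S.forces_dual_trans

end NoninterleavingHeights

section SignTable

/-- The number whose binary digits are those of `b 0`, `b 1` and `b 2`, each `w` digits long, one
after the other from the least significant end. -/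
def concatBlocks (w : ℕ) (b : Fin 3 → ℕ) : ℕ := 2 ^ w * (2 ^ w * b 2 + b 1) + b 0

/-- The index of the ternary vector `(s 0, …, s (k - 1))` among all of them. -/
def lane (s : ℕ → Fin 3) : ℕ → ℕ
  | 0 => 0
  | k + 1 => 3 ^ k * (s k : ℕ) + lane s k

/-- The set of all ternary vectors of length `k`, encoded as in `signTable`. -/
def fullTable (k : ℕ) : ℕ := 2 ^ 3 ^ k - 1

/-- The set of ternary vectors of length `k` whose `m`-th entry is `d`, as the number whose binary
digit at `lane s k` says whether `s` belongs to the set. Bitwise operations on such numbers decide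
statements about all ternary vectors simultaneously. -/
def signTable : ℕ → ℕ → Fin 3 → ℕ
  | 0, _, _ => 0
  | k + 1, m, d => concatBlocks (3 ^ k) fun e =>
      if m = k then if e = d then fullTable k else 0 else signTable k m d

theorem concatBlocks_lt {w : ℕ} {b : Fin 3 → ℕ} (hb : ∀ e, b e < 2 ^ w) :
    concatBlocks w b < 2 ^ (w * 3) := by
  have h₀ := hb 0
  have h₁ : b 1 + 1 ≤ 2 ^ w := hb 1
  have h₂ : b 2 + 1 ≤ 2 ^ w := hb 2
  calc concatBlocks w b < 2 ^ w * (2 ^ w * b 2 + b 1) + 2 ^ w := by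
        rw [concatBlocks]; gcongr
    _ = 2 ^ w * (2 ^ w * b 2 + (b 1 + 1)) := by ring
    _ ≤ 2 ^ w * (2 ^ w * b 2 + 2 ^ w) := by gcongr
    _ = 2 ^ w * (2 ^ w * (b 2 + 1)) := by ring
    _ ≤ 2 ^ w * (2 ^ w * 2 ^ w) := by gcongr
    _ = 2 ^ (w * 3) := by ring

theorem testBit_concatBlocks {w n : ℕ} {b : Fin 3 → ℕ} (hb : ∀ e, b e < 2 ^ w) (hn : n < w)
    (e : Fin 3) : (concatBlocks w b).testBit (w * e + n) = (b e).testBit n := by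
  rw [concatBlocks, Nat.testBit_two_pow_mul_add _ (hb 0), Nat.testBit_two_pow_mul_add _ (hb 1)]
  fin_cases e
  · simp [hn]
  · simp [hn]
  · rw [if_neg (by simp; omega), if_neg (by simp; omega)]
    congr 1
    simp; omega

theorem lane_lt (s : ℕ → Fin 3) (k : ℕ) : lane s k < 3 ^ k := by
  induction k with
  | zero => simp [lane]
  | succ k ih =>
    have := Nat.mul_le_mul_left (3 ^ k) (Nat.le_of_lt_succ (s k).2)
    rw [lane, pow_succ]
    omega

theorem fullTable_lt (k : ℕ) : fullTable k < 2 ^ 3 ^ k :=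
  Nat.sub_lt (Nat.two_pow_pos _) one_pos

theorem testBit_fullTable (s : ℕ → Fin 3) (k : ℕ) : (fullTable k).testBit (lane s k) = true := by
  rw [fullTable, Nat.testBit_two_pow_sub_one, decide_eq_true (lane_lt s k)]

theorem signTable_lt (k m : ℕ) (d : Fin 3) : signTable k m d < 2 ^ 3 ^ k := by
  induction k with
  | zero => simp [signTable]
  | succ k ih =>
    refine concatBlocks_lt fun e => ?_
    have := Nat.two_pow_pos (3 ^ k)
    split_ifs
    exacts [fullTable_lt k, this, ih]

theorem testBit_signTable (s : ℕ → Fin 3) {k m : ℕ} (hm : m < k) (d : Fin 3) :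
    (signTable k m d).testBit (lane s k) = decide (s m = d) := by
  induction k with
  | zero => omega
  | succ k ih =>
    rw [signTable, lane, testBit_concatBlocks _ (lane_lt s k)]
    · split_ifs with hmk hd
      · simp [hmk, hd, testBit_fullTable]
      · simp [hmk, hd]
      · exact ih (by omega)
    · intro e
      have := Nat.two_pow_pos (3 ^ k)
      split_ifs
      exacts [fullTable_lt k, this, signTable_lt k m d]

theorem testBit_foldr_lor (l : List ℕ) (n : ℕ) :
    (l.foldr (· ||| ·) 0).testBit n = l.any (Nat.testBit · n) := by
  induction l with
  | nil => simp
  | cons a l ih => simp [ih]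

theorem testBit_foldr_land (l : List ℕ) (b n : ℕ) :
    (l.foldr (· &&& ·) b).testBit n = (l.all (Nat.testBit · n) && b.testBit n) := by
  induction l with
  | nil => simp
  | cons a l ih => simp [ih, Bool.and_assoc]

end SignTable

section FiveLabels

/-- The difference of the sets encoded by `a` and `b`. -/
def andNot (a b : ℕ) : ℕ := a ^^^ (a &&& b)

theorem testBit_andNot_eq_false_iff {a b n : ℕ} :
    (andNot a b).testBit n = false ↔ (a.testBit n = true → b.testBit n = true) := by
  rw [andNot, Nat.testBit_xor, Nat.testBit_and]
  cases a.testBit n <;> cases b.testBit n <;> decide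

/-- Twice the signed area of an integer triangle. -/
def intDet (a b c : ℤ × ℤ) : ℤ := (b.1 - a.1) * (c.2 - a.2) - (b.2 - a.2) * (c.1 - a.1)

/-- The triples of labels in increasing order; their positions in this list index the entries of
sign vectors. -/
def sortedTriples : List (Fin 5 × Fin 5 × Fin 5) :=
  [(0, 1, 2), (0, 1, 3), (0, 1, 4), (0, 2, 3), (0, 2, 4), (0, 3, 4), (1, 2, 3), (1, 2, 4),
    (1, 3, 4), (2, 3, 4)]

/-- The position in `sortedTriples` of the rotation of `(i, j, k)` that occurs there; `10` if none
does. -/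
def tripleIdx (i j k : Fin 5) : ℕ :=
  sortedTriples.findIdx fun t => t == (i, j, k) || t == (j, k, i) || t == (k, i, j)

/-- The set of sign vectors in which `(i, j, k)` is positively oriented, a sign vector having at
each position of `sortedTriples` the entry `1` or `2` if that triple is oriented positively or
negatively, and `0` if it is not oriented. -/
def orientationTable (i j k : Fin 5) : ℕ :=
  if tripleIdx i j k < 10 then signTable 10 (tripleIdx i j k) 1
  else signTable 10 (tripleIdx i k j) 2

/-- The sign vectors violating one of the axioms of `PartialCCSystem` with the given labels. -/
def axiomViolations : List (Fin 5) → ℕ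
  | [t, s, p, q, r] =>
    let F := orientationTable
    andNot (F t s p &&& F t p q &&& F t q s) (F s p q) |||
      andNot (F t s p &&& F t s q &&& F t s r &&& F t p q &&& F t q r) (F t p r) |||
      andNot (F t p s &&& F t q s &&& F t r s &&& F t p q &&& F t q r) (F t p r)
  | _ => 0

/-- The sign vectors having a triple whose orientation is opposite to that of the points `x`. -/
def contradicting (x : List (ℤ × ℤ)) : ℕ :=
  (sortedTriples.map fun (i, j, k) =>
    if 0 < intDet (x.getD i 0) (x.getD j 0) (x.getD k 0) then orientationTable i k j
    else orientationTable i j k).foldr (· ||| ·) 0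

/-- The three order types of five points in general position, with all labelings: the convex hull
is a pentagon, a quadrilateral or a triangle. -/
def pointConfigurations : List (List (ℤ × ℤ)) :=
  [[(0, 0), (4, 0), (6, 3), (2, 6), (-2, 3)], [(0, 0), (6, 0), (6, 6), (0, 6), (4, 3)],
    [(0, 0), (12, 0), (6, 12), (5, 3), (7, 4)]].flatMap List.permutations'

/-- The choices of the five distinct labels of an axiom of `PartialCCSystem`; `interior` leaves the
last one unused. -/
def labelings : List (List (Fin 5)) := (List.finRange 5).permutations'

theorem contradicting_all_le_violations :
    let violations := (labelings.map axiomViolations).foldr (· ||| ·) 0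
    (pointConfigurations.map contradicting).foldr (· &&& ·) (fullTable 10) ||| violations =
      violations := by
  decide +kernel

theorem intDet_ne_zero_of_mem : ∀ x ∈ pointConfigurations, ∀ t ∈ sortedTriples,
    intDet (x.getD t.1 0) (x.getD t.2.1 0) (x.getD t.2.2 0) ≠ 0 := by
  decide +kernel

theorem forall_of_sortedTriples {P : Fin 5 → Fin 5 → Fin 5 → Prop}
    (rotate : ∀ {i j k}, P i j k → P j k i)
    (hP : ∀ t ∈ sortedTriples, P t.1 t.2.1 t.2.2 ∧ P t.1 t.2.2 t.2.1) {i j k : Fin 5}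
    (hij : i ≠ j) (hjk : j ≠ k) (hik : i ≠ k) : P i j k := by
  have key : ∀ i j k : Fin 5, i ≠ j → j ≠ k → i ≠ k → ∃ t ∈ sortedTriples,
      ((i, j, k) = t ∨ (j, k, i) = t ∨ (k, i, j) = t) ∨
        ((i, k, j) = t ∨ (k, j, i) = t ∨ (j, i, k) = t) := by decide
  obtain ⟨t, ht, (rfl | rfl | rfl) | (rfl | rfl | rfl)⟩ := key i j k hij hjk hik
  exacts [(hP _ ht).1, rotate (rotate (hP _ ht).1), rotate (hP _ ht).1, (hP _ ht).2,
    rotate (hP _ ht).2, rotate (rotate (hP _ ht).2)]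

open Classical in
/-- The sign vector of `F`, encoded as in `orientationTable`. -/
def signVector (F : Fin 5 → Fin 5 → Fin 5 → Prop) (m : ℕ) : Fin 3 :=
  let t := sortedTriples.getD m (0, 0, 0)
  if F t.1 t.2.1 t.2.2 then 1 else if F t.1 t.2.2 t.2.1 then 2 else 0

theorem orientationTable_rotate (i j k : Fin 5) :
    orientationTable j k i = orientationTable i j k := by
  have h : ∀ i j k, tripleIdx j k i = tripleIdx i j k := by decide
  rw [orientationTable, orientationTable, h, ← h j i k]

theorem orientationTable_of_mem : ∀ t ∈ sortedTriples, ∃ m < 10,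
    sortedTriples.getD m (0, 0, 0) = t ∧ orientationTable t.1 t.2.1 t.2.2 = signTable 10 m 1 ∧
      orientationTable t.1 t.2.2 t.2.1 = signTable 10 m 2 := by
  have h : ∀ t ∈ sortedTriples, tripleIdx t.1 t.2.1 t.2.2 < 10 ∧ ¬ tripleIdx t.1 t.2.2 t.2.1 < 10 ∧
      sortedTriples.getD (tripleIdx t.1 t.2.1 t.2.2) (0, 0, 0) = t := by decide +kernel
  intro t ht
  obtain ⟨hlt, hge, hget⟩ := h t ht
  exact ⟨_, hlt, hget, if_pos hlt, if_neg hge⟩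

theorem intDet_rotate (a b c : ℤ × ℤ) : intDet b c a = intDet a b c := by
  simp only [intDet]; ring

theorem intDet_swap (a b c : ℤ × ℤ) : intDet a c b = -intDet a b c := by
  simp only [intDet]; ring

namespace PartialCCSystem

variable {F : Fin 5 → Fin 5 → Fin 5 → Prop}

theorem testBit_orientationTable (hF : PartialCCSystem F) {i j k : Fin 5} (hij : i ≠ j)
    (hjk : j ≠ k) (hik : i ≠ k) :
    (orientationTable i j k).testBit (lane (signVector F) 10) = true ↔ F i j k := by
  refine forall_of_sortedTriples
    (P := fun i j k => (orientationTable i j k).testBit (lane (signVector F) 10) = true ↔ F i j k)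
    ?_ ?_ hij hjk hik
  · intro i j k h
    rw [orientationTable_rotate, h]
    exact ⟨hF.rotate, fun h => hF.rotate (hF.rotate h)⟩
  · intro t ht
    obtain ⟨m, hm, rfl, hpos, hneg⟩ := orientationTable_of_mem t ht
    simp only [hpos, hneg, testBit_signTable _ hm, signVector]
    have := @hF.asymm
    split_ifs <;> simp_all

theorem testBit_axiomViolations (hF : PartialCCSystem F) {l : List (Fin 5)} (hl : l.Nodup) :
    (axiomViolations l).testBit (lane (signVector F) 10) = false := by
  unfold axiomViolations
  split
  · rename_i t s p q r
    simp only [List.nodup_cons, List.mem_cons, List.not_mem_nil, not_or, or_false] at hl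
    obtain ⟨⟨hts, htp, htq, htr⟩, ⟨hsp, hsq, hsr⟩, ⟨hpq, hpr⟩, hqr, -⟩ := hl
    have mem {i j k : Fin 5} (hij : i ≠ j) (hjk : j ≠ k) (hik : i ≠ k) :=
      hF.testBit_orientationTable hij hjk hik
    simp only [Nat.testBit_or, Bool.or_eq_false_iff, testBit_andNot_eq_false_iff,
      Nat.testBit_and, Bool.and_eq_true, mem hts hsp htp, mem hts hsq htq, mem hts hsr htr,
      mem htp hpq htq, mem htq hqr htr, mem htp hpr htr, mem hsp hpq hsq,
      mem htq (Ne.symm hsq) hts, mem htp (Ne.symm hsp) hts, mem htr (Ne.symm hsr) hts]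
    exact ⟨⟨fun h => hF.interior h.1.1 h.1.2 h.2,
      fun h => hF.trans h.1.1.1.1 h.1.1.1.2 h.1.1.2 h.1.2 h.2⟩,
      fun h => hF.dual_trans h.1.1.1.1 h.1.1.1.2 h.1.1.2 h.1.2 h.2⟩
  · exact Nat.zero_testBit _

theorem exists_not_contradicting (hF : PartialCCSystem F) : ∃ x ∈ pointConfigurations,
    (contradicting x).testBit (lane (signVector F) 10) = false := by
  by_contra! hn
  have hviol : ((labelings.map axiomViolations).foldr (· ||| ·) 0).testBit
      (lane (signVector F) 10) = false := by
    simp only [testBit_foldr_lor, List.any_map, List.any_eq_false, Function.comp_apply,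
      Bool.not_eq_true]
    exact fun l hl => hF.testBit_axiomViolations
      ((List.mem_permutations'.1 hl).nodup_iff.2 (List.nodup_finRange 5))
  rw [← contradicting_all_le_violations, Nat.testBit_or, testBit_foldr_land,
    testBit_fullTable, Bool.and_true, Bool.or_eq_false_iff] at hviol
  have hall : (pointConfigurations.map contradicting).all
      (Nat.testBit · (lane (signVector F) 10)) = true := by
    rw [List.all_map, List.all_eq_true]
    exact fun x hx => Bool.eq_true_of_not_eq_false (hn x hx)
  exact Bool.false_ne_true (hviol.1.symm.trans hall)

theorem pos_intDet_of_not_contradicting (hF : PartialCCSystem F) {x : List (ℤ × ℤ)}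
    (hx : (contradicting x).testBit (lane (signVector F) 10) = false) :
    ∀ t ∈ sortedTriples,
      (F t.1 t.2.1 t.2.2 → 0 < intDet (x.getD t.1 0) (x.getD t.2.1 0) (x.getD t.2.2 0)) ∧
      (F t.1 t.2.2 t.2.1 → ¬ 0 < intDet (x.getD t.1 0) (x.getD t.2.1 0) (x.getD t.2.2 0)) := by
  have hne : ∀ t ∈ sortedTriples, t.1 ≠ t.2.1 ∧ t.2.1 ≠ t.2.2 ∧ t.1 ≠ t.2.2 := by
    decide +kernel
  intro t ht
  simp only [contradicting, testBit_foldr_lor, List.any_map, List.any_eq_false,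
    Function.comp_apply, Bool.not_eq_true] at hx
  have hxt := hx t ht
  obtain ⟨hij, hjk, hik⟩ := hne t ht
  have hpos := hF.testBit_orientationTable hij hjk hik
  have hneg := hF.testBit_orientationTable hik hjk.symm hij
  split_ifs at hxt <;> simp_all

theorem exists_intDet_pos (hF : PartialCCSystem F) : ∃ x : Fin 5 → ℤ × ℤ, ∀ i j k,
    i ≠ j → j ≠ k → i ≠ k →
      intDet (x i) (x j) (x k) ≠ 0 ∧ (F i j k → 0 < intDet (x i) (x j) (x k)) := by
  obtain ⟨x, hx, hcompat⟩ := hF.exists_not_contradicting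
  refine ⟨fun i => x.getD i 0, fun i j k => forall_of_sortedTriples
    (P := fun i j k => intDet (x.getD i 0) (x.getD j 0) (x.getD k 0) ≠ 0 ∧
      (F i j k → 0 < intDet (x.getD i 0) (x.getD j 0) (x.getD k 0))) ?_ ?_⟩
  · intro i j k ⟨hne, hpos⟩
    rw [intDet_rotate]
    exact ⟨hne, fun h => hpos (hF.rotate (hF.rotate h))⟩
  · intro t ht
    have hne := intDet_ne_zero_of_mem x hx t ht
    obtain ⟨hpos, hneg⟩ := hF.pos_intDet_of_not_contradicting hcompat t ht
    refine ⟨⟨hne, hpos⟩, ?_⟩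
    rw [intDet_swap]
    exact ⟨neg_ne_zero.2 hne, fun h => by have := hneg h; omega⟩

end PartialCCSystem

end FiveLabels

section Directions

variable {α β γ δ θ : ℝ} {p q x y z : Plane}

theorem det2_rotate (x y z : Plane) : det2 (z - y) (x - y) = det2 (y - x) (z - x) := by
  simp only [det2, PiLp.sub_apply]; ring

theorem det2_swap (u v : Plane) : det2 u v = -det2 v u := by
  simp only [det2]; ring

theorem exists_eq_smul_of_det2_eq_zero {u v : Plane} (h : det2 u v = 0) (hu : u ≠ 0) :
    ∃ r : ℝ, v = r • u := by
  have hdet : u 0 * v 1 = u 1 * v 0 := sub_eq_zero.1 h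
  by_cases h₀ : u 0 = 0
  · have h₁ : u 1 ≠ 0 := fun h₁ => hu (by ext i; fin_cases i <;> simp [h₀, h₁])
    have hv : v 0 = 0 := by simpa [h₀, h₁] using hdet
    exact ⟨v 1 / u 1, by ext i; fin_cases i <;> simp [h₀, h₁, hv]⟩
  · refine ⟨v 0 / u 0, ?_⟩
    ext i
    fin_cases i
    · simp [h₀]
    · simp only [Fin.mk_one, PiLp.smul_apply, smul_eq_mul]
      field_simp
      linarith

/-- The linear form giving the height of a point in the direction `θ`. -/
def dirForm (θ : ℝ) : Plane →ₗ[ℝ] ℝ where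
  toFun x := x 0 * Real.cos θ + x 1 * Real.sin θ
  map_add' x y := by simp only [PiLp.add_apply]; ring
  map_smul' c x := by simp only [PiLp.smul_apply, smul_eq_mul, RingHom.id_apply]; ring

theorem dirForm_apply (θ : ℝ) (x : Plane) :
    dirForm θ x = x 0 * Real.cos θ + x 1 * Real.sin θ := rfl

theorem dirForm_unit (θ : ℝ) : dirForm θ !₂[Real.cos θ, Real.sin θ] = 1 := by
  simp [dirForm_apply, ← sq]

theorem dirForm_ne_zero (θ : ℝ) : dirForm θ ≠ 0 := fun h => by
  simpa [h] using dirForm_unit θ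

theorem dirForm_periodic : Function.Periodic dirForm (2 * Real.pi) := fun θ => by
  ext x
  simp only [dirForm_apply, Real.cos_add_two_pi, Real.sin_add_two_pi]

theorem continuous_dirForm (θ : ℝ) : Continuous (dirForm θ) :=
  (dirForm θ).continuous_of_finiteDimensional

theorem exists_eq_mul_dirForm (f : Plane →ₗ[ℝ] ℝ) :
    ∃ r : ℝ, 0 ≤ r ∧ ∃ θ : ℝ, ∀ x, f x = r * dirForm θ x := by
  let z : ℂ := ⟨f !₂[1, 0], f !₂[0, 1]⟩
  refine ⟨‖z‖, norm_nonneg z, z.arg, fun x => ?_⟩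
  have hx : x = x 0 • (!₂[1, 0] : Plane) + x 1 • (!₂[0, 1] : Plane) := by
    ext i; fin_cases i <;> simp
  have hcos : ‖z‖ * Real.cos z.arg = f !₂[1, 0] := Complex.norm_mul_cos_arg z
  have hsin : ‖z‖ * Real.sin z.arg = f !₂[0, 1] := Complex.norm_mul_sin_arg z
  calc f x = x 0 * f !₂[1, 0] + x 1 * f !₂[0, 1] := by
        conv_lhs => rw [hx, map_add, map_smul, map_smul, smul_eq_mul, smul_eq_mul]
    _ = ‖z‖ * dirForm z.arg x := by rw [dirForm_apply, ← hcos, ← hsin]; ring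

theorem det2_mul_sin_sub (p q : Plane) (α β : ℝ) :
    det2 p q * Real.sin (β - α) = dirForm α p * dirForm β q - dirForm β p * dirForm α q := by
  simp only [det2, dirForm_apply, Real.sin_sub]
  ring

theorem sin_sub_mul_dirForm (x : Plane) (α β γ : ℝ) :
    Real.sin (γ - α) * dirForm β x =
      Real.sin (γ - β) * dirForm α x + Real.sin (β - α) * dirForm γ x := by
  simp only [dirForm_apply, Real.sin_sub]
  ring

theorem dirForm_nonpos_of_between (hαβ : α < β) (hβγ : β < γ) (hγα : γ - α < Real.pi)
    (hα : dirForm α x ≤ 0) (hγ : dirForm γ x ≤ 0) : dirForm β x ≤ 0 := by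
  have hsin := Real.sin_pos_of_pos_of_lt_pi (by linarith) hγα
  have hsin₁ : 0 < Real.sin (γ - β) := Real.sin_pos_of_pos_of_lt_pi (by linarith) (by linarith)
  have hsin₂ : 0 < Real.sin (β - α) := Real.sin_pos_of_pos_of_lt_pi (by linarith) (by linarith)
  refine nonpos_of_mul_nonpos_right ?_ hsin
  rw [sin_sub_mul_dirForm]
  exact add_nonpos (mul_nonpos_of_nonneg_of_nonpos hsin₁.le hα)
    (mul_nonpos_of_nonneg_of_nonpos hsin₂.le hγ)

/-- One of the arcs between `α` and `γ` is at most a half circle, and a point that is not higher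
than `x` at its ends is not higher inside it. -/
theorem not_lt_dirForm_of_alternating (hαβ : α < β) (hβγ : β < γ) (hγδ : γ < δ)
    (hδα : δ < α + 2 * Real.pi) (hαy : dirForm α y < dirForm α x) (hαz : dirForm α z < dirForm α x)
    (hγy : dirForm γ y ≤ dirForm γ x) (hγz : dirForm γ z ≤ dirForm γ x)
    (hβ : dirForm β x < dirForm β y) : ¬ dirForm δ x < dirForm δ z := fun hδ => by
  rcases lt_trichotomy (γ - α) Real.pi with h | h | h
  · have hβ' : dirForm β (y - x) ≤ 0 := dirForm_nonpos_of_between hαβ hβγ h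
      (by rw [map_sub]; linarith) (by rw [map_sub]; linarith)
    rw [map_sub] at hβ'
    linarith
  · obtain rfl : γ = α + Real.pi := by linarith
    simp only [dirForm_apply, Real.cos_add_pi, Real.sin_add_pi] at *
    linarith
  · have hδ' : dirForm δ (z - x) ≤ 0 := dirForm_nonpos_of_between hγδ hδα (by linarith)
      (by rw [map_sub]; linarith) (by rw [dirForm_periodic, map_sub]; linarith)
    rw [map_sub] at hδ'
    linarith

theorem mem_segment_of_det2_eq_zero {f g : Plane →ₗ[ℝ] ℝ} (hdet : det2 (q - p) (x - p) = 0)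
    (hfq : f q ≤ f p) (hfx : f x < f p) (hgp : g p < g q) (hgx : g x ≤ g q) :
    x ∈ segment ℝ p q := by
  have hqp : q - p ≠ 0 := sub_ne_zero.2 fun h => hgp.ne' (congrArg g h)
  obtain ⟨r, hr⟩ := exists_eq_smul_of_det2_eq_zero hdet hqp
  obtain rfl : x = p + r • (q - p) := by rw [← hr]; abel
  simp only [map_add, map_smul, map_sub, smul_eq_mul] at hfx hgx
  rw [segment_eq_image']
  exact ⟨r, ⟨by by_contra! h; nlinarith, by by_contra! h; nlinarith⟩, rfl⟩

variable {S : Set Plane}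

theorem det2_nonneg_of_isMaxOn_of_sin_pos (hx : x ∈ S) (hy : y ∈ S) (hz : z ∈ S)
    (hα : IsMaxOn (dirForm α) S x) (hβ : IsMaxOn (dirForm β) S y) (hγ : IsMaxOn (dirForm γ) S z)
    (hαβ : 0 < Real.sin (β - α)) (hβγ : 0 < Real.sin (γ - β)) :
    0 ≤ det2 (y - x) (z - x) := by
  have hαy : dirForm α y ≤ dirForm α x := hα hy
  have hαz : dirForm α z ≤ dirForm α x := hα hz
  have hβx : dirForm β x ≤ dirForm β y := hβ hx
  have hβz : dirForm β z ≤ dirForm β y := hβ hz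
  have hγx : dirForm γ x ≤ dirForm γ z := hγ hx
  have hγy : dirForm γ y ≤ dirForm γ z := hγ hy
  rcases le_total (dirForm β z) (dirForm β x) with h | h
  · refine nonneg_of_mul_nonneg_left ?_ hαβ
    rw [← det2_rotate, ← det2_rotate, det2_mul_sin_sub]
    simp only [map_sub]
    nlinarith
  · refine nonneg_of_mul_nonneg_left ?_ hβγ
    rw [← det2_rotate, det2_mul_sin_sub]
    simp only [map_sub]
    nlinarith

theorem det2_nonneg_of_isMaxOn (hx : x ∈ S) (hy : y ∈ S) (hz : z ∈ S)
    (hα : IsMaxOn (dirForm α) S x) (hβ : IsMaxOn (dirForm β) S y) (hγ : IsMaxOn (dirForm γ) S z)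
    (hαβ : α < β) (hβγ : β < γ) (hγα : γ < α + 2 * Real.pi) :
    0 ≤ det2 (y - x) (z - x) := by
  have hα' : IsMaxOn (dirForm (α + 2 * Real.pi)) S x := by rwa [dirForm_periodic]
  have sin_pos {η ζ : ℝ} (hηζ : η < ζ) (hπ : ζ - η < Real.pi) : 0 < Real.sin (ζ - η) :=
    Real.sin_pos_of_pos_of_lt_pi (sub_pos.2 hηζ) hπ
  -- At most one of the three arcs is as long as a half circle.
  by_cases hαβπ : β - α < Real.pi
  · by_cases hβγπ : γ - β < Real.pi
    · exact det2_nonneg_of_isMaxOn_of_sin_pos hx hy hz hα hβ hγ (sin_pos hαβ hαβπ)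
        (sin_pos hβγ hβγπ)
    · rw [← det2_rotate, ← det2_rotate]
      refine det2_nonneg_of_isMaxOn_of_sin_pos hz hx hy hγ hα' hβ (sin_pos hγα (by linarith)) ?_
      rw [← sub_sub, Real.sin_sub_two_pi]
      exact sin_pos hαβ hαβπ
  · rw [← det2_rotate]
    exact det2_nonneg_of_isMaxOn_of_sin_pos hy hz hx hβ hγ hα' (sin_pos hβγ (by linarith))
      (sin_pos hγα (by linarith))

theorem det2_nonneg_of_isMaxOn_of_cyclicLT {α β γ : Ico 0 (2 * Real.pi)} (hx : x ∈ S) (hy : y ∈ S)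
    (hz : z ∈ S) (hα : IsMaxOn (dirForm α) S x) (hβ : IsMaxOn (dirForm β) S y)
    (hγ : IsMaxOn (dirForm γ) S z) (h : CyclicLT α β γ) : 0 ≤ det2 (y - x) (z - x) := by
  have lt_add (η ζ : Ico 0 (2 * Real.pi)) : (η : ℝ) < ζ + 2 * Real.pi :=
    η.2.2.trans_le (le_add_of_nonneg_left ζ.2.1)
  rcases h with ⟨hαβ, hβγ⟩ | ⟨hβγ, hγα⟩ | ⟨hγα, hαβ⟩
  · exact det2_nonneg_of_isMaxOn hx hy hz hα hβ hγ hαβ hβγ (lt_add γ α)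
  · rw [← det2_rotate]
    exact det2_nonneg_of_isMaxOn hy hz hx hβ hγ hα hβγ hγα (lt_add α β)
  · rw [← det2_rotate, ← det2_rotate]
    exact det2_nonneg_of_isMaxOn hz hx hy hγ hα hβ hγα hαβ (lt_add β γ)

theorem isMaxOn_of_mem_openSegment {E : Type*} [AddCommGroup E] [Module ℝ E] {f : E →ₗ[ℝ] ℝ}
    {S : Set E} {x y z : E} (hy : y ∈ S) (hz : z ∈ S) (hf : IsMaxOn f S x)
    (h : x ∈ openSegment ℝ y z) : IsMaxOn f S y ∧ IsMaxOn f S z := by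
  obtain ⟨a, b, ha, hb, hab, rfl⟩ := h
  have hfy : f y ≤ f (a • y + b • z) := hf hy
  have hfz : f z ≤ f (a • y + b • z) := hf hz
  simp only [map_add, map_smul, smul_eq_mul] at hfy hfz
  have heq : f y = f z := by
    obtain rfl : b = 1 - a := by linarith
    exact le_antisymm (by nlinarith) (by nlinarith)
  have hval : f (a • y + b • z) = f z := by
    rw [map_add, map_smul, map_smul, heq, ← add_smul, hab, one_smul]
  exact ⟨fun w hw => (hf hw).trans_eq (hval.trans heq.symm), fun w hw => (hf hw).trans_eq hval⟩

theorem collinear_of_det2_eq_zero (hxy : x ≠ y) (hdet : det2 (y - x) (z - x) = 0) :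
    Collinear ℝ {x, y, z} := by
  obtain ⟨r, hr⟩ := exists_eq_smul_of_det2_eq_zero hdet (sub_ne_zero.2 hxy.symm)
  refine (collinear_iff_of_mem (p₀ := x) (by simp)).2 ⟨y - x, ?_⟩
  rintro p (rfl | rfl | rfl)
  exacts [⟨0, by simp⟩, ⟨1, by simp⟩, ⟨r, by rw [← hr, vadd_eq_add, sub_add_cancel]⟩]

theorem det2_ne_zero_of_isMaxOn (hx : x ∈ S) (hy : y ∈ S) (hz : z ∈ S) (hxy : x ≠ y) (hxz : x ≠ z)
    (hyz : y ≠ z) (hα : IsMaxOn (dirForm α) S x) (hβ : IsMaxOn (dirForm β) S y)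
    (hγ : IsMaxOn (dirForm γ) S z)
    (hno : ∀ θ, IsMaxOn (dirForm θ) S x → IsMaxOn (dirForm θ) S y → ¬ IsMaxOn (dirForm θ) S z) :
    det2 (y - x) (z - x) ≠ 0 := fun hdet => by
  rcases (collinear_of_det2_eq_zero hxy hdet).wbtw_or_wbtw_or_wbtw with h | h | h
  · obtain ⟨hx', hz'⟩ := isMaxOn_of_mem_openSegment hx hz hβ
      (mem_openSegment_of_ne_left_right hxy hyz.symm h.mem_segment)
    exact hno β hx' hβ hz'
  · obtain ⟨hy', hx'⟩ := isMaxOn_of_mem_openSegment hy hx hγ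
      (mem_openSegment_of_ne_left_right hyz hxz h.mem_segment)
    exact hno γ hx' hy' hγ
  · obtain ⟨hz', hy'⟩ := isMaxOn_of_mem_openSegment hz hy hα
      (mem_openSegment_of_ne_left_right hxz.symm hxy.symm h.mem_segment)
    exact hno α hα hy' hz'

theorem mem_frontier_convexHull_of_isMaxOn (hx : x ∈ S) (hmax : IsMaxOn (dirForm θ) S x) :
    x ∈ frontier (convexHull ℝ S) := by
  refine ⟨subset_closure (subset_convexHull ℝ S hx), fun hint => ?_⟩
  have hle : convexHull ℝ S ⊆ {y | dirForm θ y ≤ dirForm θ x} :=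
    convexHull_min hmax (convex_halfSpace_le (dirForm θ).isLinear _)
  let u : Plane := !₂[Real.cos θ, Real.sin θ]
  have hray : ContinuousAt (fun t : ℝ => x + t • u) 0 := by fun_prop
  have hnear : ∀ᶠ t : ℝ in nhds 0, x + t • u ∈ interior (convexHull ℝ S) :=
    hray.eventually_mem (by simpa using isOpen_interior.mem_nhds hint)
  obtain ⟨t, htmem, ht⟩ := ((hnear.filter_mono nhdsWithin_le_nhds).and
    (self_mem_nhdsWithin (s := Set.Ioi (0 : ℝ)))).exists
  have hbeyond : dirForm θ (x + t • u) ≤ dirForm θ x := hle (interior_subset htmem)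
  rw [map_add, map_smul, dirForm_unit, smul_eq_mul, mul_one] at hbeyond
  exact not_le_of_gt (lt_add_of_pos_right _ ht) hbeyond

end Directions

section SupportFunction

variable {A B C : Set Plane} {α β γ δ θ : ℝ}

/-- The support function of `A`, the greatest height of a point of `A` in the direction `θ` if `A`
is nonempty and compact. -/
def supportFun (A : Set Plane) (θ : ℝ) : ℝ := sSup (dirForm θ '' A)

theorem supportFun_periodic (A : Set Plane) : Function.Periodic (supportFun A) (2 * Real.pi) :=
  fun θ => by rw [supportFun, dirForm_periodic, supportFun]

theorem exists_mem_Ico_supportFun_eq (θ a : ℝ) :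
    ∃ θ' ∈ Ico a (a + 2 * Real.pi), ∀ A, supportFun A θ = supportFun A θ' := by
  obtain ⟨θ', hθ', heq⟩ := dirForm_periodic.exists_mem_Ico Real.two_pi_pos θ a
  exact ⟨θ', hθ', fun A => by rw [supportFun, heq, supportFun]⟩

theorem isCompact_convexJoin {E : Type*} [AddCommGroup E] [Module ℝ E] [TopologicalSpace E]
    [IsTopologicalAddGroup E] [ContinuousSMul ℝ E] {s t : Set E} (hs : IsCompact s)
    (ht : IsCompact t) : IsCompact (convexJoin ℝ s t) := by
  have himage : convexJoin ℝ s t = (fun q : ℝ × E × E => q.2.1 + q.1 • (q.2.2 - q.2.1)) ''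
      (Icc (0 : ℝ) 1 ×ˢ (s ×ˢ t)) := by
    ext x
    simp only [mem_convexJoin, segment_eq_image', mem_image, mem_prod, Prod.exists]
    constructor
    · rintro ⟨a, ha, b, hb, r, hr, rfl⟩
      exact ⟨r, a, b, ⟨hr, ha, hb⟩, rfl⟩
    · rintro ⟨r, a, b, ⟨hr, ha, hb⟩, rfl⟩
      exact ⟨a, ha, b, hb, r, hr, rfl⟩
  rw [himage]
  exact (isCompact_Icc.prod (hs.prod ht)).image (by fun_prop)

namespace ConvexBody2

theorem isGreatest_supportFun (hA : ConvexBody2 A) (θ : ℝ) :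
    IsGreatest (dirForm θ '' A) (supportFun A θ) :=
  (hA.2.1.image (continuous_dirForm θ)).isGreatest_sSup (hA.1.image _)

theorem dirForm_le_supportFun (hA : ConvexBody2 A) {x : Plane} (hx : x ∈ A) (θ : ℝ) :
    dirForm θ x ≤ supportFun A θ :=
  (hA.isGreatest_supportFun θ).2 (mem_image_of_mem _ hx)

theorem exists_dirForm_eq_supportFun (hA : ConvexBody2 A) (θ : ℝ) :
    ∃ x ∈ A, dirForm θ x = supportFun A θ :=
  (hA.isGreatest_supportFun θ).1

theorem exists_supportFun_lt (hA : ConvexBody2 A) (hB : ConvexBody2 B) (hC : ConvexBody2 C)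
    (hsub : ¬ A ⊆ convexHull ℝ (B ∪ C)) :
    ∃ θ ∈ Ico 0 (2 * Real.pi), supportFun B θ < supportFun A θ ∧
      supportFun C θ < supportFun A θ := by
  obtain ⟨p, hpA, hp⟩ := not_subset.1 hsub
  have hclosed : IsClosed (convexHull ℝ (B ∪ C)) := by
    rw [hB.2.2.convexHull_union hC.2.2 hB.1 hC.1]
    exact (isCompact_convexJoin hB.2.1 hC.2.1).isClosed
  obtain ⟨f, u, hlt, hu⟩ := geometric_hahn_banach_closed_point (convex_convexHull ℝ _) hclosed hp
  obtain ⟨r, hr, θ, hf⟩ := exists_eq_mul_dirForm f.toLinearMap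
  have separates {x : Plane} (hx : x ∈ B ∪ C) : dirForm θ x < dirForm θ p := by
    refine lt_of_mul_lt_mul_left ?_ hr
    rw [← hf, ← hf]
    exact (hlt x (subset_convexHull ℝ _ hx)).trans hu
  obtain ⟨b, hb, hbθ⟩ := hB.exists_dirForm_eq_supportFun θ
  obtain ⟨c, hc, hcθ⟩ := hC.exists_dirForm_eq_supportFun θ
  have hpθ := hA.dirForm_le_supportFun hpA θ
  obtain ⟨θ', hθ', heq⟩ := exists_mem_Ico_supportFun_eq θ 0
  rw [zero_add] at hθ'
  exact ⟨θ', hθ', by rw [← heq, ← heq, ← hbθ]; exact (separates (.inl hb)).trans_le hpθ,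
    by rw [← heq, ← heq, ← hcθ]; exact (separates (.inr hc)).trans_le hpθ⟩

theorem isMaxOn_union (hA : ConvexBody2 A) (hB : ConvexBody2 B) {x : Plane}
    (hx : dirForm θ x = supportFun A θ) (hle : supportFun B θ ≤ supportFun A θ) :
    IsMaxOn (dirForm θ) (A ∪ B) x := by
  rintro w (hw | hw)
  exacts [(hA.dirForm_le_supportFun hw θ).trans_eq hx.symm,
    ((hB.dirForm_le_supportFun hw θ).trans hle).trans_eq hx.symm]

/-- Points of `B` that beat `A` on each of the arcs `(α, γ)` and `(γ, α)` lie on opposite sides of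
a chord of `A`, so a connected `B \ A` would meet the chord. -/
theorem not_isPreconnected_diff_of_alternating (hA : ConvexBody2 A) (hB : ConvexBody2 B)
    (hαβ : α < β) (hβγ : β < γ) (hγδ : γ < δ) (hδα : δ < α + 2 * Real.pi)
    (hα : supportFun B α < supportFun A α) (hβ : supportFun A β < supportFun B β)
    (hγ : supportFun B γ ≤ supportFun A γ) (hδ : supportFun A δ < supportFun B δ) :
    ¬ IsPreconnected (B \ A) := fun hconn => by
  obtain ⟨p, hp, hpα⟩ := hA.exists_dirForm_eq_supportFun α
  obtain ⟨q, hq, hqγ⟩ := hA.exists_dirForm_eq_supportFun γ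
  obtain ⟨y, hy, hyβ⟩ := hB.exists_dirForm_eq_supportFun β
  obtain ⟨z, hz, hzδ⟩ := hB.exists_dirForm_eq_supportFun δ
  have lt_p {w : Plane} (hw : w ∈ B) : dirForm α w < dirForm α p :=
    ((hB.dirForm_le_supportFun hw α).trans_lt hα).trans_eq hpα.symm
  have le_q {w : Plane} (hw : w ∈ B) : dirForm γ w ≤ dirForm γ q :=
    ((hB.dirForm_le_supportFun hw γ).trans hγ).trans_eq hqγ.symm
  have lt_y {w : Plane} (hw : w ∈ A) : dirForm β w < dirForm β y :=
    ((hA.dirForm_le_supportFun hw β).trans_lt hβ).trans_eq hyβ.symm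
  have lt_z {w : Plane} (hw : w ∈ A) : dirForm δ w < dirForm δ z :=
    ((hA.dirForm_le_supportFun hw δ).trans_lt hδ).trans_eq hzδ.symm
  have hpq : dirForm γ p < dirForm γ q := by
    refine lt_of_not_ge fun hqp => ?_
    exact not_lt_dirForm_of_alternating hαβ hβγ hγδ hδα (lt_p hy) (lt_p hz)
      ((le_q hy).trans hqp) ((le_q hz).trans hqp) (lt_y hp) (lt_z hp)
  have hmaxp := hA.isMaxOn_union hB hpα hα.le
  have hmaxq := hA.isMaxOn_union hB hqγ hγ
  have hmaxy := union_comm B A ▸ hB.isMaxOn_union hA hyβ hβ.le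
  have hmaxz := union_comm B A ▸ hB.isMaxOn_union hA hzδ hδ.le
  have hdet_y : det2 (q - p) (y - p) ≤ 0 := by
    rw [det2_swap]
    exact neg_nonpos.2 (det2_nonneg_of_isMaxOn (.inl hp) (.inr hy) (.inl hq) hmaxp hmaxy hmaxq
      hαβ hβγ (hγδ.trans hδα))
  have hdet_z : 0 ≤ det2 (q - p) (z - p) :=
    det2_nonneg_of_isMaxOn (.inl hp) (.inl hq) (.inr hz) hmaxp hmaxq hmaxz
      (hαβ.trans hβγ) hγδ hδα
  have hyA : y ∉ A := fun h => (lt_y h).false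
  have hzA : z ∉ A := fun h => (lt_z h).false
  have hcont : Continuous fun x => det2 (q - p) (x - p) := by unfold det2; fun_prop
  obtain ⟨x, ⟨hxB, hxA⟩, hdet⟩ :=
    hconn.intermediate_value ⟨hy, hyA⟩ ⟨hz, hzA⟩ hcont.continuousOn ⟨hdet_y, hdet_z⟩
  exact hxA (hA.2.2.segment_subset hp hq (mem_segment_of_det2_eq_zero hdet
    ((hA.dirForm_le_supportFun hq α).trans_eq hpα.symm) (lt_p hxB) hpq (le_q hxB)))

/-- A strict inequality anywhere can replace one of the outer pair in
`not_isPreconnected_diff_of_alternating`. -/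
theorem not_isPreconnected_diff_of_alternating_of_exists_lt (hA : ConvexBody2 A)
    (hB : ConvexBody2 B) (hαβ : α < β) (hβγ : β < γ) (hγδ : γ < δ) (hδα : δ < α + 2 * Real.pi)
    (hα : supportFun B α ≤ supportFun A α) (hβ : supportFun A β < supportFun B β)
    (hγ : supportFun B γ ≤ supportFun A γ) (hδ : supportFun A δ < supportFun B δ)
    (hlt : ∃ θ, supportFun B θ < supportFun A θ) : ¬ IsPreconnected (B \ A) := by
  obtain ⟨η, hη⟩ := hlt
  obtain ⟨ε, ⟨hαε, hεα⟩, heq⟩ := exists_mem_Ico_supportFun_eq η α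
  rw [heq, heq] at hη
  have add_two_pi (ζ : ℝ) (C : Set Plane) : supportFun C (ζ + 2 * Real.pi) = supportFun C ζ :=
    supportFun_periodic C ζ
  rcases lt_trichotomy ε β with hεβ | rfl | hβε
  · exact hA.not_isPreconnected_diff_of_alternating hB hεβ hβγ hγδ (by linarith) hη hβ hγ hδ
  · exact absurd hη hβ.not_gt
  rcases lt_trichotomy ε δ with hεδ | rfl | hδε
  · exact hA.not_isPreconnected_diff_of_alternating hB (γ := α + 2 * Real.pi)
      (δ := β + 2 * Real.pi) hεδ hδα (by linarith) (by linarith) hη hδ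
      (by rwa [add_two_pi, add_two_pi]) (by rwa [add_two_pi, add_two_pi])
  · exact absurd hη hδ.not_gt
  · refine hA.not_isPreconnected_diff_of_alternating hB (α := ε - 2 * Real.pi) (by linarith) hβγ
      hγδ (by linarith) ?_ hβ hγ hδ
    rwa [(supportFun_periodic B).sub_eq, (supportFun_periodic A).sub_eq]

end ConvexBody2

end SupportFunction

/-- Some line supports all three sets from the same side: it touches each of them and one of its
closed half-planes contains them all. -/
def HasCommonSupport (A B C : Set Plane) : Prop :=
  ∃ f : Plane →ₗ[ℝ] ℝ, f ≠ 0 ∧ ∃ c,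
    IsGreatest (f '' A) c ∧ IsGreatest (f '' B) c ∧ IsGreatest (f '' C) c

section LexHeight

variable {ι : Type*} [LinearOrder ι] {A : ι → Set Plane} {i j k : ι}
  {θ η : Ico (0 : ℝ) (2 * Real.pi)}

/-- The height of `A i` in the direction `θ`. Bodies of the same height are compared by index, so
that the heights are pairwise distinct in every direction. -/
def lexHeight (A : ι → Set Plane) (θ : Ico (0 : ℝ) (2 * Real.pi)) (i : ι) : ℝ ×ₗ ι :=
  toLex (supportFun (A i) θ, i)

theorem lexHeight_lt_lexHeight : lexHeight A θ i < lexHeight A θ j ↔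
    supportFun (A i) θ < supportFun (A j) θ ∨ supportFun (A i) θ = supportFun (A j) θ ∧ i < j :=
  Prod.Lex.toLex_lt_toLex

theorem supportFun_le_of_lexHeight_lt (h : lexHeight A θ i < lexHeight A θ j) :
    supportFun (A i) θ ≤ supportFun (A j) θ :=
  (lexHeight_lt_lexHeight.1 h).elim le_of_lt fun h => h.1.le

theorem supportFun_lt_of_lexHeight_lt (hij : i < j) (h : lexHeight A θ j < lexHeight A θ i) :
    supportFun (A j) θ < supportFun (A i) θ :=
  (lexHeight_lt_lexHeight.1 h).resolve_right fun h => h.2.asymm hij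

theorem noninterleavingHeights_lexHeight (hbody : ∀ i, ConvexBody2 (A i))
    (hconn : ∀ i j, i ≠ j → IsPreconnected (A i \ A j))
    (hsub : ∀ i j k, i ≠ j → i ≠ k → ¬ A i ⊆ convexHull ℝ (A j ∪ A k)) :
    NoninterleavingHeights (lexHeight A) where
  injective θ i j h := congrArg (fun p : ℝ ×ₗ ι => (ofLex p).2) h
  noninterleaving {i j w x y z} hwx hxy hyz hw hx hy hz := by
    have exists_lt {i j : ι} (hij : i ≠ j) : ∃ θ, supportFun (A j) θ < supportFun (A i) θ := by
      obtain ⟨θ, -, hθ, -⟩ :=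
        (hbody i).exists_supportFun_lt (hbody j) (hbody j) (hsub i j j hij hij)
      exact ⟨θ, hθ⟩
    have lt_add_two_pi : (z : ℝ) < w + 2 * Real.pi := z.2.2.trans_le (le_add_of_nonneg_left w.2.1)
    have hij : i ≠ j := by rintro rfl; exact hw.false
    rcases hij.lt_or_gt with hlt | hlt
    · refine (hbody j).not_isPreconnected_diff_of_alternating_of_exists_lt (hbody i) hxy hyz
        lt_add_two_pi (add_lt_add_left (Subtype.coe_lt_coe.2 hwx) _)
        (supportFun_le_of_lexHeight_lt hx)
        (supportFun_lt_of_lexHeight_lt hlt hy) (supportFun_le_of_lexHeight_lt hz) ?_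
        (exists_lt hij.symm) (hconn i j hij)
      rw [supportFun_periodic, supportFun_periodic]
      exact supportFun_lt_of_lexHeight_lt hlt hw
    · exact (hbody i).not_isPreconnected_diff_of_alternating_of_exists_lt (hbody j) hwx hxy hyz
        lt_add_two_pi (supportFun_le_of_lexHeight_lt hw) (supportFun_lt_of_lexHeight_lt hlt hx)
        (supportFun_le_of_lexHeight_lt hy) (supportFun_lt_of_lexHeight_lt hlt hz)
        (exists_lt hij) (hconn j i hij.symm)
  exists_isTopAmong {i j k} hij _ hik := by
    obtain ⟨θ, hθ, hj, hk⟩ :=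
      (hbody i).exists_supportFun_lt (hbody j) (hbody k) (hsub i j k hij hik)
    exact ⟨⟨θ, hθ⟩, lexHeight_lt_lexHeight.2 (.inl hj), lexHeight_lt_lexHeight.2 (.inl hk)⟩

theorem isMaxOn_of_isTopAmong_lexHeight (hbody : ∀ i, ConvexBody2 (A i)) {a : Plane}
    (ha : dirForm θ a = supportFun (A i) θ) (h : IsTopAmong (lexHeight A) θ i j k) :
    IsMaxOn (dirForm θ) (A i ∪ A j ∪ A k) a := by
  have le {l : ι} (hl : supportFun (A l) θ ≤ supportFun (A i) θ) {x : Plane} (hx : x ∈ A l) :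
      dirForm θ x ≤ dirForm θ a :=
    (((hbody l).dirForm_le_supportFun hx θ).trans hl).trans_eq ha.symm
  rintro x ((hx | hx) | hx)
  exacts [le le_rfl hx, le (supportFun_le_of_lexHeight_lt h.1) hx,
    le (supportFun_le_of_lexHeight_lt h.2) hx]

theorem ne_of_lexHeight_lt_of_lexHeight_lt (hbody : ∀ i, ConvexBody2 (A i)) {a b : Plane}
    (ha : a ∈ A i) (hb : b ∈ A j) (haθ : dirForm θ a = supportFun (A i) θ)
    (hbη : dirForm η b = supportFun (A j) η) (hθ : lexHeight A θ j < lexHeight A θ i)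
    (hη : lexHeight A η i < lexHeight A η j) : a ≠ b := by
  rintro rfl
  have hjθ : ¬ supportFun (A j) θ < supportFun (A i) θ :=
    (haθ.ge.trans ((hbody j).dirForm_le_supportFun hb θ)).not_gt
  have hiη : ¬ supportFun (A i) η < supportFun (A j) η :=
    (hbη.ge.trans ((hbody i).dirForm_le_supportFun ha η)).not_gt
  exact ((lexHeight_lt_lexHeight.1 hθ).resolve_left hjθ).2.asymm
    ((lexHeight_lt_lexHeight.1 hη).resolve_left hiη).2

theorem exists_isMaxOn_of_topsInOrder_lexHeight (hbody : ∀ i, ConvexBody2 (A i))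
    (h : TopsInOrder (lexHeight A) i j k) : ∃ a ∈ A i, ∃ b ∈ A j, ∃ c ∈ A k,
      (a ≠ b ∧ a ≠ c ∧ b ≠ c) ∧ ∃ α β γ : Ico (0 : ℝ) (2 * Real.pi), CyclicLT α β γ ∧
        IsMaxOn (dirForm α) (A i ∪ A j ∪ A k) a ∧ IsMaxOn (dirForm β) (A i ∪ A j ∪ A k) b ∧
        IsMaxOn (dirForm γ) (A i ∪ A j ∪ A k) c := by
  obtain ⟨α, β, γ, hαβγ, hi, hj, hk⟩ := h
  obtain ⟨a, ha, haα⟩ := (hbody i).exists_dirForm_eq_supportFun α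
  obtain ⟨b, hb, hbβ⟩ := (hbody j).exists_dirForm_eq_supportFun β
  obtain ⟨c, hc, hcγ⟩ := (hbody k).exists_dirForm_eq_supportFun γ
  have hab : a ≠ b := ne_of_lexHeight_lt_of_lexHeight_lt hbody ha hb haα hbβ hi.1 hj.2
  have hac : a ≠ c := ne_of_lexHeight_lt_of_lexHeight_lt hbody ha hc haα hcγ hi.2 hk.1
  have hbc : b ≠ c := ne_of_lexHeight_lt_of_lexHeight_lt hbody hb hc hbβ hcγ hj.1 hk.2
  have hjki : A j ∪ A k ∪ A i = A i ∪ A j ∪ A k := by rw [union_comm, union_assoc]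
  have hkij : A k ∪ A i ∪ A j = A i ∪ A j ∪ A k := by rw [union_assoc, union_comm]
  exact ⟨a, ha, b, hb, c, hc, ⟨hab, hac, hbc⟩, α, β, γ, hαβγ,
    isMaxOn_of_isTopAmong_lexHeight hbody haα hi,
    hjki ▸ isMaxOn_of_isTopAmong_lexHeight hbody hbβ hj,
    hkij ▸ isMaxOn_of_isTopAmong_lexHeight hbody hcγ hk⟩

/-- If the three points of contact were collinear, the line through them would support all three
bodies. -/
theorem ccwOriented_of_topsInOrder_lexHeight (hbody : ∀ i, ConvexBody2 (A i))
    (hno : ¬ HasCommonSupport (A i) (A j) (A k))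
    (h : TopsInOrder (lexHeight A) i j k) : CCWOriented (A i) (A j) (A k) := by
  obtain ⟨a, ha, b, hb, c, hc, ⟨hab, hac, hbc⟩, α, β, γ, hαβγ, hα, hβ, hγ⟩ :=
    exists_isMaxOn_of_topsInOrder_lexHeight hbody h
  have haS : a ∈ A i ∪ A j ∪ A k := .inl (.inl ha)
  have hbS : b ∈ A i ∪ A j ∪ A k := .inl (.inr hb)
  have hcS : c ∈ A i ∪ A j ∪ A k := .inr hc
  have hdet : det2 (b - a) (c - a) ≠ 0 := by
    refine det2_ne_zero_of_isMaxOn haS hbS hcS hab hac hbc hα hβ hγ fun θ haθ hbθ hcθ => ?_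
    have hba : dirForm θ b = dirForm θ a := le_antisymm (haθ hbS) (hbθ haS)
    have hca : dirForm θ c = dirForm θ a := le_antisymm (haθ hcS) (hcθ haS)
    exact hno ⟨dirForm θ, dirForm_ne_zero θ, dirForm θ a,
      ⟨⟨a, ha, rfl⟩, forall_mem_image.2 fun _ hx => haθ (.inl (.inl hx))⟩,
      ⟨⟨b, hb, hba⟩, forall_mem_image.2 fun _ hx => haθ (.inl (.inr hx))⟩,
      ⟨⟨c, hc, hca⟩, forall_mem_image.2 fun _ hx => haθ (.inr hx)⟩⟩
  exact ⟨a, ⟨ha, mem_frontier_convexHull_of_isMaxOn haS hα⟩,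
    b, ⟨hb, mem_frontier_convexHull_of_isMaxOn hbS hβ⟩,
    c, ⟨hc, mem_frontier_convexHull_of_isMaxOn hcS hγ⟩,
    (det2_nonneg_of_isMaxOn_of_cyclicLT haS hbS hcS hα hβ hγ hαβγ).lt_of_ne' hdet⟩

theorem cwOriented_of_ccwOriented {A B C : Set Plane} (h : CCWOriented A C B) :
    CWOriented A B C := by
  obtain ⟨a, ha, c, hc, b, hb, hdet⟩ := h
  rw [union_right_comm] at ha hb hc
  exact ⟨a, ha, b, hb, c, hc, by rwa [det2_swap, neg_lt_zero]⟩

end LexHeight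

section Representation

/-- The point of the plane with integer coordinates `p`. -/
def intPoint (p : ℤ × ℤ) : Plane := !₂[(p.1 : ℝ), (p.2 : ℝ)]

theorem det2_intPoint (a b c : ℤ × ℤ) :
    det2 (intPoint b - intPoint a) (intPoint c - intPoint a) = intDet a b c := by
  simp [det2, intPoint, intDet]

theorem NoninterleavingHeights.exists_points {X K : Type*} [LinearOrder X] [LinearOrder K]
    {h : X → Fin 5 → K} (S : NoninterleavingHeights h) : ∃ x : Fin 5 → Plane,
      ∀ i j k, i ≠ j → j ≠ k → i ≠ k → det2 (x j - x i) (x k - x i) ≠ 0 ∧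
        (0 < det2 (x j - x i) (x k - x i) → TopsInOrder h i j k) ∧
        (det2 (x j - x i) (x k - x i) < 0 → TopsInOrder h i k j) := by
  obtain ⟨x, hx⟩ := S.partialCCSystem.exists_intDet_pos
  have topsInOrder_of_pos {i j k : Fin 5} (hij : i ≠ j) (hjk : j ≠ k) (hik : i ≠ k)
      (hpos : 0 < intDet (x i) (x j) (x k)) : TopsInOrder h i j k := by
    by_contra hn
    have hneg := (hx i k j hik hjk.symm hij).2 ((S.forces_iff hik hjk.symm hij).2 hn)
    rw [intDet_swap] at hneg
    exact hpos.not_gt (neg_pos.1 hneg)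
  refine ⟨fun i => intPoint (x i), fun i j k hij hjk hik => ?_⟩
  rw [det2_intPoint, Int.cast_ne_zero, Int.cast_pos, Int.cast_lt_zero]
  refine ⟨(hx i j k hij hjk hik).1, topsInOrder_of_pos hij hjk hik, fun hneg => ?_⟩
  exact topsInOrder_of_pos hik hjk.symm hij (by rwa [intDet_swap, neg_pos])

theorem not_subset_convexHull_union_of_distinct {ι E : Type*} [Fintype ι] [AddCommGroup E]
    [Module ℝ E] {A : ι → Set E} (hcard : 2 < Fintype.card ι)
    (h : ∀ i j k, i ≠ j → j ≠ k → i ≠ k → ¬ A i ⊆ convexHull ℝ (A j ∪ A k)) (i j k : ι)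
    (hij : i ≠ j) (hik : i ≠ k) : ¬ A i ⊆ convexHull ℝ (A j ∪ A k) := by
  rcases ne_or_eq j k with hjk | rfl
  · exact h i j k hij hjk hik
  · classical
    obtain ⟨l, hl⟩ := Finset.exists_mem_notMem_of_card_lt_card (s := {i, j}) (t := Finset.univ)
      (Finset.card_le_two.trans_lt hcard)
    simp only [Finset.mem_univ, Finset.mem_insert, Finset.mem_singleton, not_or, true_and] at hl
    rw [union_self]
    exact fun hsub => h i j l hij (Ne.symm hl.2) (Ne.symm hl.1)
      (hsub.trans (convexHull_mono subset_union_left))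

theorem GenPos.not_subset_convexHull_union {F : Set (Set Plane)} {A B C : Set Plane}
    (hF : GenPos F) (hA : A ∈ F) (hB : B ∈ F) (hC : C ∈ F) (hAB : A ≠ B) (hBC : B ≠ C)
    (hAC : A ≠ C) : ¬ A ⊆ convexHull ℝ (B ∪ C) := fun hsub => by
  have hpos : ConvexPos {A, B, C} := hF {A, B, C} (by simp [insert_subset_iff, hA, hB, hC])
    (ncard_eq_three.2 ⟨A, B, C, hAB, hAC, hBC, rfl⟩)
  have hdiff : ({A, B, C} : Set (Set Plane)) \ {A} = {B, C} :=
    insert_sdiff_self_of_notMem (by simp [hAB, hAC])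
  refine hpos A (by simp) ?_
  rw [hdiff, sUnion_insert, sUnion_pair]
  exact (convexHull_min (union_subset hsub (subset_convexHull ℝ _))
    (convex_convexHull ℝ _)).antisymm (convexHull_mono subset_union_right)

theorem NoTripleTangentLine.not_hasCommonSupport {F : Set (Set Plane)} {A B C : Set Plane}
    (hF : NoTripleTangentLine F) (hA : A ∈ F) (hB : B ∈ F) (hC : C ∈ F) (hAB : A ≠ B)
    (hBC : B ≠ C) (hAC : A ≠ C) : ¬ HasCommonSupport A B C := by
  rintro ⟨f, hf, c, hfA, hfB, hfC⟩
  have tangent {D : Set Plane} (hD : IsGreatest (f '' D) c) : TangentLineTo f c D :=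
    ⟨hD.1, .inl (forall_mem_image.1 hD.2)⟩
  exact hF f hf c A hA B hB C hC hAB hBC hAC ⟨tangent hfA, tangent hfB, tangent hfC⟩

theorem five_bodies_representable_general (A : Fin 5 → Set Plane)
    (hbody : ∀ i, ConvexBody2 (A i))
    (hconn : ∀ i j, i ≠ j → IsPreconnected (A i \ A j))
    (hsub : ∀ i j k, i ≠ j → j ≠ k → i ≠ k → ¬ A i ⊆ convexHull ℝ (A j ∪ A k))
    (hno : ∀ i j k, i ≠ j → j ≠ k → i ≠ k → ¬ HasCommonSupport (A i) (A j) (A k)) :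
    ∃ x : Fin 5 → Plane, ∀ i j k : Fin 5, i ≠ j → j ≠ k → i ≠ k →
      det2 (x j - x i) (x k - x i) ≠ 0 ∧
      (0 < det2 (x j - x i) (x k - x i) → CCWOriented (A i) (A j) (A k)) ∧
      (det2 (x j - x i) (x k - x i) < 0 → CWOriented (A i) (A j) (A k)) := by
  have heights : NoninterleavingHeights (lexHeight A) :=
    noninterleavingHeights_lexHeight hbody hconn
      (not_subset_convexHull_union_of_distinct (by simp) hsub)
  obtain ⟨x, hx⟩ := heights.exists_points
  refine ⟨x, fun i j k hij hjk hik => ?_⟩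
  obtain ⟨hdet, hpos, hneg⟩ := hx i j k hij hjk hik
  exact ⟨hdet, fun h => ccwOriented_of_topsInOrder_lexHeight hbody (hno i j k hij hjk hik) (hpos h),
    fun h => cwOriented_of_ccwOriented <|
      ccwOriented_of_topsInOrder_lexHeight hbody (hno i k j hik hjk.symm hij) (hneg h)⟩

end Representation

/-- Every family of five noncrossing convex bodies in general position is
representable by points. -/
theorem five_bodies_representable (A : Fin 5 → Set Plane)
    (hinj : Function.Injective A)
    (hbody : ∀ i, ConvexBody2 (A i))
    (hnc : ∀ i j, i ≠ j → NoncrossingPair (A i) (A j))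
    (hgen : GenPos (Set.range A))
    (htan : ∀ i j, i ≠ j → ¬ TangentBodies (A i) (A j))
    (hline : NoTripleTangentLine (Set.range A)) :
    ∃ x : Fin 5 → Plane,
      (∀ i j k : Fin 5, i ≠ j → j ≠ k → i ≠ k → det2 (x j - x i) (x k - x i) ≠ 0) ∧
      ∀ i j k : Fin 5, i < j → j < k →
        (0 < det2 (x j - x i) (x k - x i) → CCWOriented (A i) (A j) (A k)) ∧
        (det2 (x j - x i) (x k - x i) < 0 → CWOriented (A i) (A j) (A k)) := by
  obtain ⟨x, hx⟩ := five_bodies_representable_general A hbody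
    (fun i j hij => (hnc i j hij).1.isPreconnected)
    (fun i j k hij hjk hik => hgen.not_subset_convexHull_union (mem_range_self i)
      (mem_range_self j) (mem_range_self k) (hinj.ne hij) (hinj.ne hjk) (hinj.ne hik))
    (fun i j k hij hjk hik => hline.not_hasCommonSupport (mem_range_self i)
      (mem_range_self j) (mem_range_self k) (hinj.ne hij) (hinj.ne hjk) (hinj.ne hik))
  exact ⟨x, fun i j k hij hjk hik => (hx i j k hij hjk hik).1,
    fun i j k hij hjk => (hx i j k hij.ne hjk.ne (hij.trans hjk).ne).2⟩
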